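/- arXiv:2411.15765 — 15 statements merged into one kernel-verified Lean document; each statement's English description precedes it below -/
import Mathlib

section
/- Let k ≥ 1 be an integer. Every k-stepwise irregular graph is bipartite. -/
open SimpleGraph Finset

/-- A graph `G` is `k`-stepwise irregular if the degrees of every pair of adjacent
vertices differ by exactly `k`. -/
def IsSI {V : Type*} [Fintype V] (G : SimpleGraph V) [DecidableRel G.Adj] (k : ℕ) : Prop :=
  ∀ ⦃u v : V⦄, G.Adj u v → |(G.degree u : ℤ) - (G.degree v : ℤ)| = (k : ℤ)
/-- Every `k`-stepwise irregular graph (`k ≥ 1`) is bipartite. -/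
theorem ksi_bipartite {V : Type*} [Fintype V] (G : SimpleGraph V) [DecidableRel G.Adj]
    (k : ℕ) (hk : 1 ≤ k) (hSI : IsSI G k) : G.Colorable 2 := by
  have hdiv : ∀ {a b : ℕ}, a = b + k → a / k = b / k + 1 := by
    rintro a b rfl
    exact Nat.add_div_right b hk
  refine ⟨Coloring.mk (fun v => Fin.ofNat 2 (G.degree v / k)) fun {u v} huv heq => ?_⟩
  have hmod : G.degree u / k % 2 = G.degree v / k % 2 := congrArg Fin.val heq
  rcases (abs_eq (Int.natCast_nonneg k)).mp (hSI huv) with h | h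
  · have := hdiv (show G.degree u = G.degree v + k by omega)
    omega
  · have := hdiv (show G.degree v = G.degree u + k by omega)
    omega
end

section
/- Let k ≥ 1 be an integer and let G be a connected k-stepwise irregular graph of diameter 2 with n vertices. Then G is isomorphic to the complete bipartite graph K_{(n+k)/2, (n−k)/2}; in particular n + k is even. -/
open SimpleGraph Finset

/-- In a connected `k`-stepwise irregular graph, all degrees agree modulo `k`. -/
theorem IsSI.exists_degree_sub_eq_mul {V : Type*} [Fintype V] {G : SimpleGraph V}
    [DecidableRel G.Adj] {k : ℕ} (hSI : IsSI G k) (hconn : G.Connected) (r v : V) :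
    ∃ q : ℤ, (G.degree v : ℤ) - G.degree r = q * k := by
  obtain ⟨w⟩ := hconn.preconnected v r
  induction w with
  | nil => exact ⟨0, by simp⟩
  | cons h _ ih =>
    obtain ⟨q, hq⟩ := ih
    rcases (abs_eq (Int.natCast_nonneg k)).1 (hSI h) with h | h
    · exact ⟨q + 1, by linarith⟩
    · exact ⟨q - 1, by linarith⟩

/-- A connected `k`-stepwise irregular graph with `k ≥ 1` is bipartite. -/
theorem IsSI.exists_bipartition {V : Type*} [Fintype V] {G : SimpleGraph V}
    [DecidableRel G.Adj] {k : ℕ} (hSI : IsSI G k) (hk : 1 ≤ k) (hconn : G.Connected) :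
    ∃ p : V → Prop, ∀ u v, G.Adj u v → (p u ↔ ¬ p v) := by
  obtain ⟨r⟩ := hconn.nonempty
  choose q hq using hSI.exists_degree_sub_eq_mul hconn r
  refine ⟨fun v => Even (q v), fun u v huv => ?_⟩
  have hk0 : (k : ℤ) ≠ 0 := by positivity
  have hu := hq u
  have hv := hq v
  rcases (abs_eq (Int.natCast_nonneg k)).1 (hSI huv) with h | h
  · have : q u = q v + 1 := mul_right_cancel₀ hk0 (by linarith)
    simp [this]
  · have : q v = q u + 1 := mul_right_cancel₀ hk0 (by linarith)
    simp [this]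

/-- In a graph of diameter two, distinct nonadjacent vertices have a common neighbour. -/
theorem SimpleGraph.exists_common_neighbor_of_diam_eq_two {V : Type*} {G : SimpleGraph V}
    (hconn : G.Connected) (hdiam : G.diam = 2) {u v : V} (hne : u ≠ v) (h : ¬ G.Adj u v) :
    ∃ w, G.Adj u w ∧ G.Adj w v := by
  have hle : G.dist u v ≤ 2 :=
    hdiam ▸ dist_le_diam (ediam_ne_top_of_diam_ne_zero (by omega))
  obtain ⟨w, hw⟩ := hconn.exists_walk_length_eq_dist u v
  rw [← hw] at hle
  match w, hle with
  | .nil, _ => exact absurd rfl hne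
  | .cons h₁ .nil, _ => exact absurd h₁ h
  | .cons h₁ (.cons h₂ .nil), _ => exact ⟨_, h₁, h₂⟩
  | .cons _ (.cons _ (.cons _ _)), hle => simp at hle

/-- A graph in which adjacency means lying on opposite sides of a partition is complete
bipartite. -/
theorem SimpleGraph.nonempty_iso_completeBipartiteGraph {V : Type*} {G : SimpleGraph V}
    {p : V → Prop} (h : ∀ u v, G.Adj u v ↔ (p u ↔ ¬ p v)) {m l : ℕ}
    (e : {v // p v} ≃ Fin m) (f : {v // ¬ p v} ≃ Fin l) :
    Nonempty (G ≃g completeBipartiteGraph (Fin m) (Fin l)) := by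
  classical
  refine ⟨RelIso.symm ⟨(Equiv.sumCongr e f).symm.trans (Equiv.sumCompl p), ?_⟩⟩
  rintro (a | a) (b | b) <;>
    simp [h, (e.symm _).2, (f.symm _).2]

/-- The degree of a vertex on one side of a complete bipartition. -/
theorem SimpleGraph.degree_eq_card_of_adj_iff {V : Type*} [Fintype V] {G : SimpleGraph V}
    [DecidableRel G.Adj] {p : V → Prop} [DecidablePred p]
    (h : ∀ u v, G.Adj u v ↔ (p u ↔ ¬ p v)) {u : V} (hu : p u) :
    G.degree u = Fintype.card {v // ¬ p v} := by
  rw [Fintype.card_subtype, ← card_neighborFinset_eq_degree]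
  congr 1
  ext v
  simp [h, hu]

/-- A connected `k`-stepwise irregular graph of diameter `2` on `n` vertices is
isomorphic to `K_{(n+k)/2, (n-k)/2}`; in particular `n + k` is even. -/
theorem ksi_diam_two {V : Type*} [Fintype V] (G : SimpleGraph V) [DecidableRel G.Adj]
    (k : ℕ) (hk : 1 ≤ k) (hSI : IsSI G k) (hconn : G.Connected) (hdiam : G.diam = 2) :
    Even (Fintype.card V + k) ∧
      Nonempty (G ≃g completeBipartiteGraph (Fin ((Fintype.card V + k) / 2))
        (Fin ((Fintype.card V - k) / 2))) := by
  classical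
  obtain ⟨p, hp⟩ := hSI.exists_bipartition hk hconn
  have hadj : ∀ u v, G.Adj u v ↔ (p u ↔ ¬ p v) := by
    refine fun u v => ⟨hp u v, fun h => ?_⟩
    by_contra huv
    obtain ⟨w, huw, hwv⟩ :=
      exists_common_neighbor_of_diam_eq_two hconn hdiam (by rintro rfl; tauto) huv
    have := hp _ _ huw
    have := hp _ _ hwv
    tauto
  have hadj' : ∀ u v, G.Adj u v ↔ (¬ p u ↔ ¬ ¬ p v) := fun u v => by
    rw [hadj]; tauto
  have : Nontrivial V := nontrivial_of_diam_ne_zero (G := G) (by omega)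
  obtain ⟨r⟩ := hconn.nonempty
  obtain ⟨s, hrs⟩ := hconn.preconnected.exists_adj_of_nontrivial r
  have hcard := Fintype.card_subtype_compl p
  have hle := Fintype.card_subtype_le p
  have hnn : Fintype.card {v // ¬ ¬ p v} = Fintype.card {v // p v} :=
    Fintype.card_congr (Equiv.subtypeEquivRight fun _ => not_not)
  have habs : |(Fintype.card {v // p v} : ℤ) - Fintype.card {v // ¬ p v}| = k := by
    have hk' := hSI hrs
    by_cases hr : p r
    · have hs := (hp r s hrs).1 hr
      rw [degree_eq_card_of_adj_iff hadj hr, degree_eq_card_of_adj_iff hadj' hs, hnn] at hk'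
      rwa [abs_sub_comm]
    · have hs : p s := by have := hp r s hrs; tauto
      rwa [degree_eq_card_of_adj_iff hadj hs, degree_eq_card_of_adj_iff hadj' hr, hnn] at hk'
  rcases (abs_eq (Int.natCast_nonneg k)).1 habs with h | h
  · exact ⟨⟨Fintype.card {v // p v}, by omega⟩, nonempty_iso_completeBipartiteGraph hadj
      (Fintype.equivFinOfCardEq (by omega)) (Fintype.equivFinOfCardEq (by omega))⟩
  · exact ⟨⟨Fintype.card {v // ¬ p v}, by omega⟩, nonempty_iso_completeBipartiteGraph hadj'
      (Fintype.equivFinOfCardEq (by omega)) (Fintype.equivFinOfCardEq (by omega))⟩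
end

section
/- Let k ≥ 1 be an integer and let G and H be graphs, each with at least one vertex. The Cartesian (box) product G □ H is k-stepwise irregular if and only if both G and H are k-stepwise irregular. -/
open SimpleGraph Finset

instance {α β : Type*} [DecidableEq α] [DecidableEq β]
    (G : SimpleGraph α) (H : SimpleGraph β) [DecidableRel G.Adj] [DecidableRel H.Adj] :
    DecidableRel (G □ H).Adj := fun x y =>
  decidable_of_iff (G.Adj x.1 y.1 ∧ x.2 = y.2 ∨ H.Adj x.2 y.2 ∧ x.1 = y.1) boxProd_adj.symm

/-- The Cartesian (box) product of two nonempty graphs is `k`-stepwise irregular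
if and only if both factors are. -/
theorem ksi_boxProd_iff {α β : Type*} [Fintype α] [Fintype β] [DecidableEq α] [DecidableEq β]
    [Nonempty α] [Nonempty β]
    (G : SimpleGraph α) (H : SimpleGraph β) [DecidableRel G.Adj] [DecidableRel H.Adj]
    (k : ℕ) (hk : 1 ≤ k) :
    IsSI (G □ H) k ↔ (IsSI G k ∧ IsSI H k) := by
  constructor
  · intro h
    constructor
    · intro u v huv
      obtain ⟨b⟩ := ‹Nonempty β›
      simpa [degree_boxProd] using h (boxProd_adj_left (H := H) (b := b) |>.2 huv)
    · intro u v huv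
      obtain ⟨a⟩ := ‹Nonempty α›
      simpa [degree_boxProd] using h (boxProd_adj_right (G := G) (a := a) |>.2 huv)
  · rintro ⟨hG, hH⟩ ⟨a, b⟩ ⟨c, d⟩ h
    obtain ⟨hadj, rfl : b = d⟩ | ⟨hadj, rfl : a = c⟩ := boxProd_adj.1 h
    · simpa [degree_boxProd] using hG hadj
    · simpa [degree_boxProd] using hH hadj
end

section
/- Let k ≥ 1 be an integer. If T is a k-stepwise irregular tree (a connected acyclic graph with at least two vertices), then the diameter of T is even. -/
open SimpleGraph Finset

/-- Along a walk in a `k`-stepwise irregular graph the degree changes by a multiple of `k`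
whose parity is that of the length of the walk. -/
lemma IsSI.exists_degree_sub_eq {V : Type*} [Fintype V] {G : SimpleGraph V}
    [DecidableRel G.Adj] {k : ℕ} (hSI : IsSI G k) {u v : V} (p : G.Walk u v) :
    ∃ m : ℤ, (G.degree v : ℤ) - G.degree u = k * m ∧ (Even m ↔ Even p.length) := by
  induction p with
  | nil => exact ⟨0, by simp⟩
  | cons h p ih =>
    obtain ⟨m, hm, hpar⟩ := ih
    rw [Walk.length_cons, Nat.even_add_one]
    rcases (abs_eq (Int.natCast_nonneg k)).mp (hSI h) with hd | hd
    · exact ⟨m - 1, by linarith, by rw [Int.even_sub_one, hpar]⟩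
    · exact ⟨m + 1, by linarith, by rw [Int.even_add_one, hpar]⟩

/-- In a nontrivial tree, a vertex at maximum distance from some vertex is a leaf. -/
lemma SimpleGraph.IsTree.degree_eq_one_of_forall_dist_le {V : Type*} [Nontrivial V]
    {G : SimpleGraph V} (hT : G.IsTree) {u v : V} [Fintype (G.neighborSet v)]
    (h : ∀ w, G.dist u w ≤ G.dist u v) : G.degree v = 1 := by
  rw [degree_eq_one_iff_existsUnique_adj]
  obtain ⟨w, hw⟩ := hT.connected.preconnected.exists_adj_of_nontrivial v
  have eq_snd : ∀ (x : V), G.Adj v x → ∀ (p : G.Walk v u), p.IsPath → x = p.snd := by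
    intro x hx p hp
    obtain ⟨q, hq⟩ := hT.connected.exists_walk_length_eq_dist x u
    have hdist : G.dist u v = G.dist u x + 1 := by
      rcases hT.dist_eq_dist_add_one_of_adj u hx with h' | h'
      · exact h'
      · have := h x
        omega
    have hcons : (Walk.cons hx q).IsPath := by
      apply Walk.isPath_of_length_eq_dist
      rw [Walk.length_cons, hq, dist_comm (u := x), dist_comm (u := v), hdist]
    have := congrArg Subtype.val ((hT.isAcyclic.subsingleton_path v u).elim ⟨_, hcons⟩ ⟨p, hp⟩)
    simp only at this
    rw [← this, Walk.snd_cons]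
  obtain ⟨p, hp⟩ := hT.connected.exists_isPath v u
  exact ⟨w, hw, fun x hx => (eq_snd x hx p hp).trans (eq_snd w hw p hp).symm⟩

/-- A `k`-stepwise irregular tree has even diameter. -/
theorem ksi_tree_even_diam {V : Type*} [Fintype V] (G : SimpleGraph V) [DecidableRel G.Adj]
    (k : ℕ) (hk : 1 ≤ k) (hT : G.IsTree) (hn : 2 ≤ Fintype.card V) (hSI : IsSI G k) :
    Even G.diam := by
  have : Nontrivial V := Fintype.one_lt_card_iff_nontrivial.mp hn
  have hfin : G.ediam ≠ ⊤ := connected_iff_ediam_ne_top.mp hT.connected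
  obtain ⟨u, v, huv⟩ := G.exists_dist_eq_diam
  have hv : G.degree v = 1 :=
    hT.degree_eq_one_of_forall_dist_le (u := u) fun _ => (dist_le_diam hfin).trans_eq huv.symm
  have hu : G.degree u = 1 :=
    hT.degree_eq_one_of_forall_dist_le (u := v) fun _ => by
      rw [G.dist_comm (u := v) (v := u), huv]
      exact dist_le_diam hfin
  obtain ⟨p, hp⟩ := hT.connected.exists_walk_length_eq_dist u v
  obtain ⟨m, hm, hpar⟩ := hSI.exists_degree_sub_eq p
  have hm0 : m = 0 := by
    have hk0 : (k : ℤ) ≠ 0 := by omega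
    rw [hu, hv, sub_self, eq_comm] at hm
    exact (mul_eq_zero.mp hm).resolve_left hk0
  rw [← huv, ← hp, ← hpar, hm0]
  exact Even.zero
end

section
/- Let k ≥ 1 be an integer. If G is a k-stepwise irregular unicyclic graph (a connected graph whose number of edges equals its number of vertices), then the diameter of G is even. -/
open SimpleGraph Finset

namespace IsSI

variable {V : Type*} [Fintype V] {G : SimpleGraph V} [DecidableRel G.Adj] {k : ℕ}

/-- Along a walk of a `k`-stepwise irregular graph, the degree changes by a multiple of `k` whose
coefficient has the parity of the length of the walk. -/
theorem exists_degree_sub_eq_s6 (h : IsSI G k) {u v : V} (p : G.Walk u v) :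
    ∃ m : ℤ, (G.degree u : ℤ) - G.degree v = k * m ∧ (Even m ↔ Even p.length) := by
  induction p with
  | nil => exact ⟨0, by simp⟩
  | @cons a b c hab p ih =>
    obtain ⟨m, hm, hpar⟩ := ih
    rcases eq_or_eq_neg_of_abs_eq (h hab) with h1 | h1
    · exact ⟨m + 1, by linarith,
      by rw [Walk.length_cons, Int.even_add_one, Nat.even_add_one, hpar]⟩
    · exact ⟨m - 1, by linarith,
      by rw [Walk.length_cons, Int.even_sub_one, Nat.even_add_one, hpar]⟩

theorem exists_degree_sub_eq_dist (h : IsSI G k) (hconn : G.Connected) (u v : V) :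
    ∃ m : ℤ, (G.degree u : ℤ) - G.degree v = k * m ∧ (Even m ↔ Even (G.dist u v)) := by
  obtain ⟨p, hp⟩ := hconn.exists_walk_length_eq_dist u v
  exact hp ▸ h.exists_degree_sub_eq_s6 p

theorem dist_ne_of_adj (h : IsSI G k) (hk : 1 ≤ k) (hconn : G.Connected) (v : V) {x y : V}
    (hxy : G.Adj x y) : G.dist v x ≠ G.dist v y := by
  intro heq
  obtain ⟨m, hm, hmp⟩ := h.exists_degree_sub_eq_dist hconn v x
  obtain ⟨l, hl, hlp⟩ := h.exists_degree_sub_eq_dist hconn v y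
  have hk0 : (k : ℤ) ≠ 0 := by positivity
  have hpar : Even m ↔ Even l := by rw [hmp, hlp, heq]
  rcases eq_or_eq_neg_of_abs_eq (h hxy) with h1 | h1
  · have : l = m + 1 := mul_left_cancel₀ hk0 (by linarith)
    subst this
    simp only [Int.even_add_one] at hpar
    tauto
  · have : m = l + 1 := mul_left_cancel₀ hk0 (by linarith)
    subst this
    simp only [Int.even_add_one] at hpar
    tauto

end IsSI

section Parents

variable {V : Type*} [Fintype V] (G : SimpleGraph V) [DecidableRel G.Adj]

/-- The neighbours of `x` that are closer to `v` than `x` is. -/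
noncomputable def parents (v x : V) : Finset V :=
  {y | G.Adj x y ∧ G.dist v y < G.dist v x}

variable {G}

theorem mem_parents {v x y : V} :
    y ∈ parents G v x ↔ G.Adj x y ∧ G.dist v y < G.dist v x := by
  simp [parents]

theorem one_le_card_parents (hconn : G.Connected) {v x : V} (hx : x ≠ v) :
    1 ≤ #(parents G v x) := by
  obtain ⟨p, hp⟩ := hconn.exists_walk_length_eq_dist x v
  cases p with
  | nil => exact absurd rfl hx
  | @cons _ y _ hxy p =>
    refine card_pos.2 ⟨y, mem_parents.2 ⟨hxy, ?_⟩⟩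
    have := dist_le p
    rw [Walk.length_cons] at hp
    rw [dist_comm, dist_comm (u := v)]
    omega

theorem sum_card_parents {v : V} (hne : ∀ x y, G.Adj x y → G.dist v x ≠ G.dist v y) :
    ∑ x, #(parents G v x) = #G.edgeFinset := by
  have hdeg : ∀ x, G.degree x =
      #(parents G v x) + #{y | G.Adj y x ∧ G.dist v x < G.dist v y} := by
    intro x
    classical
    rw [← card_neighborFinset_eq_degree, ← card_union_of_disjoint]
    · congr 1
      ext y
      have := hne x y
      simp only [mem_neighborFinset, mem_union, mem_parents, mem_filter, mem_univ, true_and,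
        G.adj_comm y x]
      have := lt_or_gt_of_ne (a := G.dist v x) (b := G.dist v y)
      tauto
    · refine disjoint_left.2 fun y hy hy' => ?_
      have h1 := (mem_parents.1 hy).2
      have h2 := (mem_filter.1 hy').2.2
      omega
  have hcomm : ∑ x, #(parents G v x) =
      ∑ x, #{y | G.Adj y x ∧ G.dist v x < G.dist v y} :=
    sum_card_bipartiteAbove_eq_sum_card_bipartiteBelow
      (s := univ) (t := univ) (fun x y => G.Adj x y ∧ G.dist v y < G.dist v x)
  have hsum := G.sum_degrees_eq_twice_card_edges
  simp only [hdeg, sum_add_distrib, ← hcomm] at hsum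
  omega

theorem degree_eq_card_parents_of_dist_eq_diam {v x : V} (hconn : G.Connected)
    (hne : ∀ x y, G.Adj x y → G.dist v x ≠ G.dist v y) (hx : G.dist v x = G.diam) :
    G.degree x = #(parents G v x) := by
  have := hconn.nonempty
  rw [← card_neighborFinset_eq_degree]
  congr 1
  ext y
  have hle : G.dist v y ≤ G.diam := dist_le_diam (connected_iff_ediam_ne_top.1 hconn)
  have := hne x y
  rw [mem_neighborFinset, mem_parents]
  constructor
  · exact fun h => ⟨h, by have := this h; omega⟩
  · exact fun h => h.1

/-- In a connected bipartite unicyclic graph, the excess of the numbers of parents over those in a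
tree is one. -/
theorem card_parents_add_le_three [DecidableEq V] {v : V} (hconn : G.Connected)
    (huni : #G.edgeFinset = Fintype.card V)
    (hne : ∀ x y, G.Adj x y → G.dist v x ≠ G.dist v y) {x y : V} (hxy : x ≠ y)
    (hy : y ≠ v) : #(parents G v x) + (if x = v then 1 else 0) + #(parents G v y) ≤ 3 := by
  let q : V → ℤ := fun z => #(parents G v z) + (if z = v then 1 else 0) - 1
  have hq : ∀ z, 0 ≤ q z := by
    intro z
    by_cases hz : z = v
    · simp [q, hz]
    · have := one_le_card_parents hconn hz
      simp only [q, hz, if_false]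
      omega
  have hsum : ∑ z, q z = 1 := by
    have := sum_card_parents hne
    simp only [q, sum_sub_distrib, sum_add_distrib, ← Nat.cast_sum, this, huni]
    simp
  have hle := sum_le_sum_of_subset_of_nonneg (subset_univ {x, y}) (fun z _ _ => hq z)
  rw [sum_pair hxy, hsum] at hle
  simp only [q, hy, if_false] at hle
  split_ifs at hle ⊢ <;> omega

end Parents

theorem IsSI.degree_ne_two_of_dist_eq_diam {V : Type*} [Fintype V] [DecidableEq V]
    {G : SimpleGraph V} [DecidableRel G.Adj] (hconn : G.Connected)
    (huni : #G.edgeFinset = Fintype.card V) (h : IsSI G 1) {u v : V} (huv : u ≠ v)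
    (hd : G.dist v u = G.diam) : G.degree u ≠ 2 := by
  intro hu
  have hne : ∀ x y, G.Adj x y → G.dist v x ≠ G.dist v y :=
    fun x y hxy => h.dist_ne_of_adj le_rfl hconn v hxy
  have hpu : #(parents G v u) = 2 := by
    rw [← degree_eq_card_parents_of_dist_eq_diam hconn hne hd, hu]
  have hexc := fun x (hx : x ≠ u) => card_parents_add_le_three hconn huni hne hx huv
  obtain ⟨w, hw, hwv⟩ := exists_mem_ne (by omega : 1 < #(parents G v u)) v
  obtain ⟨huw, hlt⟩ := mem_parents.1 hw
  -- `w` has one parent and the child `u`, so its degree is three.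
  obtain ⟨t, ht⟩ := card_pos.1 (one_le_card_parents hconn hwv)
  have hwu : w ≠ u := huw.ne'
  have htu : t ≠ u := by
    rintro rfl
    have := (mem_parents.1 ht).2
    omega
  have hpw := hexc w hwu
  have hdw : 2 ≤ G.degree w := by
    rw [← card_neighborFinset_eq_degree, ← card_pair htu]
    refine card_le_card fun z hz => ?_
    rcases mem_insert.1 hz with rfl | hz
    · exact (G.mem_neighborFinset _ _).2 (mem_parents.1 ht).1
    · rw [mem_singleton.1 hz]
      exact (G.mem_neighborFinset _ _).2 huw.symm
  have hdw3 : G.degree w = 3 := by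
    have := h huw
    rw [hu] at this
    rcases eq_or_eq_neg_of_abs_eq this with h1 | h1 <;> push_cast at h1 <;> omega
  -- Another child `x` of `w` is a leaf, which contradicts the degree of `w`.
  obtain ⟨x, hx, hxp⟩ : ∃ x ∈ G.neighborFinset w, x ∉ insert u (parents G v w) := by
    refine exists_mem_notMem_of_card_lt_card ?_
    rw [card_neighborFinset_eq_degree, hdw3]
    have := card_insert_le u (parents G v w)
    simp only [hwv, if_false] at hpw
    omega
  rw [mem_insert, not_or] at hxp
  have hwx : G.Adj w x := (G.mem_neighborFinset _ _).1 hx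
  have hxd : G.dist v x = G.diam := by
    have := hconn.nonempty
    have h1 : G.dist v x ≤ G.diam := dist_le_diam (connected_iff_ediam_ne_top.1 hconn)
    have h2 := hne w x hwx
    have h3 : ¬ G.dist v x < G.dist v w := fun hlt => hxp.2 (mem_parents.2 ⟨hwx, hlt⟩)
    have h4 : G.dist v u ≤ G.dist v w + G.dist w u := hconn.dist_triangle
    have h5 : G.dist w u = 1 := dist_eq_one_iff_adj.2 huw.symm
    omega
  have hdx := degree_eq_card_parents_of_dist_eq_diam hconn hne hxd
  have hpx := hexc x hxp.1
  have habs := h hwx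
  rw [hdw3] at habs
  rcases eq_or_eq_neg_of_abs_eq habs with h1 | h1 <;> push_cast at h1 <;> omega

theorem IsSI.degree_le_two_of_dist_eq_diam {V : Type*} [Fintype V] [DecidableEq V]
    {G : SimpleGraph V} [DecidableRel G.Adj] {k : ℕ} (hk : 1 ≤ k) (hconn : G.Connected)
    (huni : #G.edgeFinset = Fintype.card V) (h : IsSI G k) {u v : V} (huv : u ≠ v)
    (hd : G.dist v u = G.diam) : 1 ≤ G.degree u ∧ G.degree u ≤ 2 := by
  have hne : ∀ x y, G.Adj x y → G.dist v x ≠ G.dist v y :=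
    fun x y hxy => h.dist_ne_of_adj hk hconn v hxy
  rw [degree_eq_card_parents_of_dist_eq_diam hconn hne hd]
  have := card_parents_add_le_three hconn huni hne huv.symm huv
  rw [if_pos rfl] at this
  exact ⟨one_le_card_parents hconn huv, by omega⟩

/-- A `k`-stepwise irregular unicyclic graph (connected, with as many edges as
vertices) has even diameter. -/
theorem ksi_unicyclic_even_diam {V : Type*} [Fintype V] [DecidableEq V]
    (G : SimpleGraph V) [DecidableRel G.Adj]
    (k : ℕ) (hk : 1 ≤ k) (hconn : G.Connected)
    (huni : G.edgeFinset.card = Fintype.card V) (hSI : IsSI G k) :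
    Even G.diam := by
  have := hconn.nonempty
  obtain ⟨u, v, huv⟩ := G.exists_dist_eq_diam
  rcases eq_or_ne u v with rfl | hne
  · rw [← huv, SimpleGraph.dist_self]
    exact Even.zero
  have hvu : G.dist v u = G.diam := by rw [SimpleGraph.dist_comm, huv]
  have hu := hSI.degree_le_two_of_dist_eq_diam hk hconn huni hne hvu
  have hv := hSI.degree_le_two_of_dist_eq_diam hk hconn huni hne.symm huv
  obtain ⟨m, hm, hpar⟩ := hSI.exists_degree_sub_eq_dist hconn u v
  rw [huv] at hpar
  by_cases heq : G.degree u = G.degree v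
  · rw [heq, sub_self, zero_eq_mul] at hm
    rcases hm with hm | hm
    · omega
    · exact hpar.1 (hm ▸ Even.zero)
  · have hdvd : (k : ℤ) ∣ 1 := by
      have hdvd : (k : ℤ) ∣ (G.degree u : ℤ) - G.degree v := ⟨m, hm⟩
      rcases (by omega : (G.degree u : ℤ) - G.degree v = 1 ∨
        (G.degree u : ℤ) - G.degree v = -1) with h1 | h1
      · rwa [h1] at hdvd
      · rwa [h1, dvd_neg] at hdvd
    obtain rfl : k = 1 := Nat.dvd_one.1 (by exact_mod_cast hdvd)
    have hu2 := hSI.degree_ne_two_of_dist_eq_diam hconn huni hne hvu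
    have hv2 := hSI.degree_ne_two_of_dist_eq_diam hconn huni hne.symm huv
    omega
end

section
/- Let k ≥ 1 be an integer and let G be a k-stepwise irregular graph on n vertices with at least one edge. Then the maximum degree satisfies Δ(G) ≤ ⌊(n + k)/2⌋. -/
open SimpleGraph Finset

/-- A `k`-stepwise irregular graph on `n` vertices with at least one edge satisfies
`Δ(G) ≤ ⌊(n + k)/2⌋`. -/
theorem ksi_maxDegree_le {V : Type*} [Fintype V] (G : SimpleGraph V) [DecidableRel G.Adj]
    (k : ℕ) (hk : 1 ≤ k) (hSI : IsSI G k) (he : ∃ u v, G.Adj u v) :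
    G.maxDegree ≤ (Fintype.card V + k) / 2 := by
  classical
  obtain ⟨a, b, hab⟩ := he
  have : Nonempty V := ⟨a⟩
  obtain ⟨v, hv⟩ := G.exists_maximal_degree_vertex
  have hpos : 0 < G.degree v :=
    ((G.degree_pos_iff_exists_adj a).2 ⟨b, hab⟩).trans_le (hv ▸ G.degree_le_maxDegree a)
  have hnbr : ∀ w, G.Adj v w → G.degree w + k = G.degree v := by
    intro w hw
    have hle := hv ▸ G.degree_le_maxDegree w
    have hdiff := hSI hw
    rw [abs_of_nonneg (by omega)] at hdiff
    omega
  obtain ⟨u, hu⟩ := (G.degree_pos_iff_exists_adj v).1 hpos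
  have hdisj : Disjoint (G.neighborFinset v) (G.neighborFinset u) := by
    rw [Finset.disjoint_left]
    intro w hvw huw
    rw [mem_neighborFinset] at hvw huw
    have hdiff := hSI huw
    have hwdeg := hnbr w hvw
    have hudeg := hnbr u hu
    rw [show G.degree u = G.degree w by omega, sub_self, abs_zero] at hdiff
    omega
  have hcard := Finset.card_le_univ (G.neighborFinset v ∪ G.neighborFinset u)
  rw [Finset.card_union_of_disjoint hdisj, card_neighborFinset_eq_degree,
    card_neighborFinset_eq_degree] at hcard
  have hudeg := hnbr u hu
  omega
end

section
/- Let k ≥ 1 be an integer and let G be a k-stepwise irregular graph on n vertices with at least one edge, maximum degree Δ = Δ(G) and m edges. Then m ≤ n·Δ·(Δ − k)/(2Δ − k). -/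
open SimpleGraph Finset

/-- The endpoints of an edge of a `k`-stepwise irregular graph have degrees `d` and `d - k`,
so the sum of their reciprocals is at least that for `d` the maximum degree. -/
theorem IsSI.inv_add_inv_le {V : Type*} [Fintype V] {G : SimpleGraph V} [DecidableRel G.Adj]
    {k : ℕ} (hSI : IsSI G k) {u v : V} (huv : G.Adj u v) :
    (G.maxDegree : ℝ)⁻¹ + ((G.maxDegree : ℝ) - k)⁻¹ ≤
      (G.degree u : ℝ)⁻¹ + (G.degree v : ℝ)⁻¹ := by
  wlog h : G.degree v ≤ G.degree u generalizing u v
  · rw [add_comm (G.degree u : ℝ)⁻¹]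
    exact this huv.symm (le_of_not_ge h)
  have hd := hSI huv
  rw [abs_of_nonneg (by omega)] at hd
  have hdeg : G.degree u = G.degree v + k := by omega
  have hv : (0 : ℝ) < G.degree v := by
    exact_mod_cast (G.degree_pos_iff_exists_adj v).2 ⟨u, huv.symm⟩
  have hu : (0 : ℝ) < G.degree u := by
    exact_mod_cast (G.degree_pos_iff_exists_adj u).2 ⟨v, huv⟩
  have hle : (G.degree u : ℝ) ≤ G.maxDegree := by exact_mod_cast G.degree_le_maxDegree u
  have hcast : (G.degree u : ℝ) = G.degree v + k := by exact_mod_cast hdeg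
  exact add_le_add (inv_anti₀ hu hle) (inv_anti₀ hv (by linarith))

/-- Summing the reciprocal degree of the tail over all darts counts non-isolated vertices. -/
theorem sum_neighborFinset_inv_degree_le_card {V : Type*} [Fintype V] (G : SimpleGraph V)
    [DecidableRel G.Adj] :
    ∑ u, ∑ _v ∈ G.neighborFinset u, (G.degree u : ℝ)⁻¹ ≤ Fintype.card V := by
  calc ∑ u, ∑ _v ∈ G.neighborFinset u, (G.degree u : ℝ)⁻¹ ≤ ∑ _u : V, (1 : ℝ) := by
        refine sum_le_sum fun u _ => ?_
        rw [sum_const, card_neighborFinset_eq_degree, nsmul_eq_mul]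
        exact mul_inv_le_one
    _ = Fintype.card V := by simp

/-- A `k`-stepwise irregular graph on `n` vertices with at least one edge, maximum
degree `Δ` and `m` edges satisfies `m ≤ n·Δ·(Δ − k)/(2Δ − k)`. -/
theorem ksi_size_le {V : Type*} [Fintype V] [DecidableEq V]
    (G : SimpleGraph V) [DecidableRel G.Adj]
    (k : ℕ) (hk : 1 ≤ k) (hSI : IsSI G k) (he : ∃ u v, G.Adj u v) :
    (G.edgeFinset.card : ℝ) ≤
      (Fintype.card V : ℝ) * G.maxDegree * ((G.maxDegree : ℝ) - k) /
        (2 * (G.maxDegree : ℝ) - k) := by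
  obtain ⟨u₀, v₀, h₀⟩ := he
  have hΔk : (0 : ℝ) < (G.maxDegree : ℝ) - k := by
    have hd := hSI h₀
    have hu := (G.degree_pos_iff_exists_adj u₀).2 ⟨v₀, h₀⟩
    have hv := (G.degree_pos_iff_exists_adj v₀).2 ⟨u₀, h₀.symm⟩
    have hu' := G.degree_le_maxDegree u₀
    have hv' := G.degree_le_maxDegree v₀
    have : k < G.maxDegree := by
      rcases abs_cases ((G.degree u₀ : ℤ) - (G.degree v₀ : ℤ)) with h | h <;> omega
    rw [sub_pos]
    exact_mod_cast this
  have hk' : (0 : ℝ) < k := by exact_mod_cast hk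
  have hΔ : (0 : ℝ) < G.maxDegree := by linarith
  have hswap : ∑ u, ∑ v ∈ G.neighborFinset u, (G.degree v : ℝ)⁻¹ =
      ∑ u, ∑ _v ∈ G.neighborFinset u, (G.degree u : ℝ)⁻¹ :=
    sum_comm' fun u v => by simp [G.adj_comm u v]
  have hdeg : ∑ u, (G.degree u : ℝ) = 2 * G.edgeFinset.card := by
    exact_mod_cast G.sum_degrees_eq_twice_card_edges
  set c := (G.maxDegree : ℝ)⁻¹ + ((G.maxDegree : ℝ) - k)⁻¹ with hc
  have hsum : 2 * (G.edgeFinset.card : ℝ) * c ≤ 2 * Fintype.card V :=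
    calc 2 * (G.edgeFinset.card : ℝ) * c = ∑ u, ∑ _v ∈ G.neighborFinset u, c := by
          simp only [sum_const, card_neighborFinset_eq_degree, nsmul_eq_mul, ← sum_mul, hdeg]
      _ ≤ ∑ u, ∑ v ∈ G.neighborFinset u, ((G.degree u : ℝ)⁻¹ + (G.degree v : ℝ)⁻¹) :=
          sum_le_sum fun u _ => sum_le_sum fun v hv =>
            hSI.inv_add_inv_le ((G.mem_neighborFinset u v).1 hv)
      _ = 2 * ∑ u, ∑ _v ∈ G.neighborFinset u, (G.degree u : ℝ)⁻¹ := by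
          simp_rw [sum_add_distrib]
          rw [hswap, two_mul]
      _ ≤ 2 * Fintype.card V := by
          gcongr
          exact sum_neighborFinset_inv_degree_le_card G
  have hc' : c * (G.maxDegree * ((G.maxDegree : ℝ) - k)) = 2 * (G.maxDegree : ℝ) - k := by
    rw [hc]
    field_simp
    ring
  rw [le_div_iff₀ (by linarith), ← hc', mul_assoc (Fintype.card V : ℝ), ← mul_assoc]
  exact mul_le_mul_of_nonneg_right (by linarith) (mul_pos hΔ hΔk).le
end

section
/- Let k ≥ 1 be an integer and let G be a k-stepwise irregular graph on n vertices with at least one edge, maximum degree Δ = Δ(G) and m edges. Then m = n·Δ·(Δ − k)/(2Δ − k) holds if and only if G has exactly two distinct vertex degrees. -/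
open SimpleGraph Finset

/-- In a stepwise irregular graph, adjacent vertices have degrees `d` and `d + k`. -/
lemma IsSI.degree_eq_or {V : Type*} [Fintype V] {G : SimpleGraph V} [DecidableRel G.Adj] {k : ℕ}
    (h : IsSI G k) {u v : V} (huv : G.Adj u v) :
    G.degree u = G.degree v + k ∨ G.degree v = G.degree u + k := by
  rcases (abs_eq (Int.natCast_nonneg k)).1 (h huv) with h | h <;> omega

/-- The difference `n - c m` as a sum of local contributions of the vertices and darts. -/
lemma two_mul_card_sub_mul_card_edgeFinset {V : Type*} [Fintype V] [DecidableEq V]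
    (G : SimpleGraph V) [DecidableRel G.Adj] (c : ℝ) :
    2 * ((Fintype.card V : ℝ) - c * G.edgeFinset.card) =
      ∑ v, ((if G.degree v = 0 then 2 else 0) +
        ∑ u ∈ G.neighborFinset v, (1 / (G.degree v : ℝ) + 1 / (G.degree u : ℝ) - c)) := by
  have hm : (2 : ℝ) * G.edgeFinset.card = ∑ v, (G.degree v : ℝ) := by
    exact_mod_cast (G.sum_degrees_eq_twice_card_edges).symm
  have hswap : ∑ v, ∑ u ∈ G.neighborFinset v, 1 / (G.degree u : ℝ) =
      ∑ v, ∑ _u ∈ G.neighborFinset v, 1 / (G.degree v : ℝ) := by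
    refine Finset.sum_comm' fun v u => ?_
    simp [G.adj_comm]
  have hvertex : ∀ v, (if G.degree v = 0 then (2 : ℝ) else 0) +
      2 * ∑ _u ∈ G.neighborFinset v, 1 / (G.degree v : ℝ) = 2 := by
    intro v
    rw [Finset.sum_const, card_neighborFinset_eq_degree, nsmul_eq_mul]
    split_ifs with h
    · simp [h]
    · field_simp
      ring
  have hn : (2 : ℝ) * Fintype.card V = ∑ v, ((if G.degree v = 0 then (2 : ℝ) else 0) +
      2 * ∑ _u ∈ G.neighborFinset v, 1 / (G.degree v : ℝ)) := by
    rw [Finset.sum_congr rfl fun v _ => hvertex v, Finset.sum_const, Finset.card_univ,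
      nsmul_eq_mul, mul_comm]
  have hc : ∑ v, ∑ _u ∈ G.neighborFinset v, c = c * ∑ v, (G.degree v : ℝ) := by
    simp [Finset.mul_sum, mul_comm]
  rw [mul_sub, mul_left_comm, hm, hn]
  simp only [Finset.sum_add_distrib, Finset.sum_sub_distrib, ← Finset.mul_sum]
  rw [hswap, hc]
  ring

/-- Among pairs `a, a + k` with `a + k ≤ D`, the sum of reciprocals is least at `a + k = D`. -/
lemma reciprocal_sum_sub_nonneg {a k D : ℝ} (ha : 0 < a) (hk : 0 < k) (h : a + k ≤ D) :
    0 ≤ 1 / a + 1 / (a + k) - (2 * D - k) / (D * (D - k)) ∧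
      (1 / a + 1 / (a + k) - (2 * D - k) / (D * (D - k)) = 0 ↔ a + k = D) := by
  have hDk : 0 < D - k := by linarith
  have hD : 0 < D := by linarith
  have hak : 0 < a + k := by linarith
  have key : 1 / a + 1 / (a + k) - (2 * D - k) / (D * (D - k)) =
      (D - (a + k)) * (1 / (a * (D - k)) + 1 / ((a + k) * D)) := by
    field_simp
    ring
  have hpos : 0 < 1 / (a * (D - k)) + 1 / ((a + k) * D) := by positivity
  rw [key]
  refine ⟨mul_nonneg (by linarith) hpos.le, ?_⟩
  rw [mul_eq_zero, or_iff_left hpos.ne', sub_eq_zero, eq_comm]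

/-- The reciprocal degree sum along an edge of a stepwise irregular graph is minimal exactly
when one of its ends has maximum degree. -/
lemma IsSI.reciprocal_sum_sub_nonneg {V : Type*} [Fintype V] {G : SimpleGraph V}
    [DecidableRel G.Adj] {k : ℕ} (hSI : IsSI G k) (hk : 1 ≤ k) {v u : V} (h : G.Adj v u) :
    0 ≤ 1 / (G.degree v : ℝ) + 1 / (G.degree u : ℝ) -
        (2 * (G.maxDegree : ℝ) - k) / (G.maxDegree * ((G.maxDegree : ℝ) - k)) ∧
      (1 / (G.degree v : ℝ) + 1 / (G.degree u : ℝ) -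
        (2 * (G.maxDegree : ℝ) - k) / (G.maxDegree * ((G.maxDegree : ℝ) - k)) = 0 ↔
        G.degree v = G.maxDegree ∨ G.degree u = G.maxDegree) := by
  have hv : 0 < G.degree v := (G.degree_pos_iff_exists_adj v).2 ⟨u, h⟩
  have hu : 0 < G.degree u := (G.degree_pos_iff_exists_adj u).2 ⟨v, h.symm⟩
  have hvD := G.degree_le_maxDegree v
  have huD := G.degree_le_maxDegree u
  have hkR : (0 : ℝ) < k := by exact_mod_cast hk
  rcases hSI.degree_eq_or h with e | e
  · have := _root_.reciprocal_sum_sub_nonneg (a := G.degree u) (k := k) (D := G.maxDegree)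
      (by exact_mod_cast hu) hkR (by exact_mod_cast e ▸ hvD)
    rw [e, Nat.cast_add, add_comm (1 / ((G.degree u : ℝ) + k))]
    refine ⟨this.1, this.2.trans ?_⟩
    norm_cast
    omega
  · have := _root_.reciprocal_sum_sub_nonneg (a := G.degree v) (k := k) (D := G.maxDegree)
      (by exact_mod_cast hv) hkR (by exact_mod_cast e ▸ huD)
    rw [e, Nat.cast_add]
    refine ⟨this.1, this.2.trans ?_⟩
    norm_cast
    omega

/-- A stepwise irregular graph with an edge has exactly two degrees iff every degree is
`Δ` or `Δ - k`. -/
lemma IsSI.card_image_degree_eq_two_iff {V : Type*} [Fintype V] {G : SimpleGraph V}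
    [DecidableRel G.Adj] {k : ℕ} (hSI : IsSI G k) (hk : 1 ≤ k) (he : ∃ u v, G.Adj u v) :
    (Finset.univ.image fun v => G.degree v).card = 2 ↔
      ∀ v, G.degree v = G.maxDegree ∨ G.degree v + k = G.maxDegree := by
  obtain ⟨a, b, hab⟩ := he
  have : Nonempty V := ⟨a⟩
  obtain ⟨x, hx⟩ := G.exists_maximal_degree_vertex
  have ha : 0 < G.degree a := (G.degree_pos_iff_exists_adj a).2 ⟨b, hab⟩
  have haD := G.degree_le_maxDegree a
  obtain ⟨y, hxy⟩ := (G.degree_pos_iff_exists_adj x).1 (by omega)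
  have hy : G.degree y + k = G.maxDegree := by
    have := G.degree_le_maxDegree y
    rcases hSI.degree_eq_or hxy with h | h <;> omega
  have hsub : {G.maxDegree, G.degree y} ⊆ Finset.univ.image fun v => G.degree v := by
    intro d hd
    rcases Finset.mem_insert.1 hd with rfl | hd
    · exact Finset.mem_image.2 ⟨x, Finset.mem_univ _, hx.symm⟩
    · exact Finset.mem_image.2 ⟨y, Finset.mem_univ _, (Finset.mem_singleton.1 hd).symm⟩
  have hpair : ({G.maxDegree, G.degree y} : Finset ℕ).card = 2 := Finset.card_pair (by omega)
  constructor
  · intro h v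
    have hv : G.degree v ∈ ({G.maxDegree, G.degree y} : Finset ℕ) := by
      rw [Finset.eq_of_subset_of_card_le hsub (by omega)]
      exact Finset.mem_image_of_mem _ (Finset.mem_univ v)
    rcases Finset.mem_insert.1 hv with hv | hv
    · exact Or.inl hv
    · rw [Finset.mem_singleton.1 hv]
      exact Or.inr hy
  · intro h
    rw [← hpair]
    congr 1
    refine Finset.Subset.antisymm (fun d hd => ?_) hsub
    obtain ⟨v, -, rfl⟩ := Finset.mem_image.1 hd
    have := h v
    simp only [Finset.mem_insert, Finset.mem_singleton]
    omega

/-- For a `k`-stepwise irregular graph on `n` vertices with at least one edge: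
`m = n·Δ·(Δ − k)/(2Δ − k)` holds iff `G` has exactly two distinct degrees. -/
theorem ksi_size_eq_iff {V : Type*} [Fintype V] [DecidableEq V]
    (G : SimpleGraph V) [DecidableRel G.Adj]
    (k : ℕ) (hk : 1 ≤ k) (hSI : IsSI G k) (he : ∃ u v, G.Adj u v) :
    (G.edgeFinset.card : ℝ) =
        (Fintype.card V : ℝ) * G.maxDegree * ((G.maxDegree : ℝ) - k) /
          (2 * (G.maxDegree : ℝ) - k) ↔
      (Finset.univ.image fun v => G.degree v).card = 2 := by
  rw [hSI.card_image_degree_eq_two_iff hk he]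
  have hkD : k < G.maxDegree := by
    obtain ⟨a, b, hab⟩ := he
    have ha := (G.degree_pos_iff_exists_adj a).2 ⟨b, hab⟩
    have hb := (G.degree_pos_iff_exists_adj b).2 ⟨a, hab.symm⟩
    have haD := G.degree_le_maxDegree a
    have hbD := G.degree_le_maxDegree b
    rcases hSI.degree_eq_or hab with h | h <;> omega
  have hkR : (k : ℝ) < G.maxDegree := by exact_mod_cast hkD
  have hk0 : (0 : ℝ) ≤ k := k.cast_nonneg
  have hD : (G.maxDegree : ℝ) ≠ 0 := by linarith
  have hDk : (G.maxDegree : ℝ) - k ≠ 0 := by linarith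
  have hDDk : 2 * (G.maxDegree : ℝ) - k ≠ 0 := by linarith
  have hsum := two_mul_card_sub_mul_card_edgeFinset G
    ((2 * (G.maxDegree : ℝ) - k) / (G.maxDegree * ((G.maxDegree : ℝ) - k)))
  have hnonneg : ∀ v, ∀ u ∈ G.neighborFinset v, _ := fun v u hu =>
    (hSI.reciprocal_sum_sub_nonneg hk ((G.mem_neighborFinset v u).1 hu)).1
  have hite : ∀ v, (0 : ℝ) ≤ if G.degree v = 0 then 2 else 0 := fun v => by
    split_ifs <;> norm_num
  trans 2 * ((Fintype.card V : ℝ) - (2 * (G.maxDegree : ℝ) - k) /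
    (G.maxDegree * ((G.maxDegree : ℝ) - k)) * G.edgeFinset.card) = 0
  · rw [mul_eq_zero, or_iff_right two_ne_zero, sub_eq_zero, eq_div_iff hDDk, div_mul_eq_mul_div,
      eq_div_iff (mul_ne_zero hD hDk), ← mul_assoc, eq_comm, mul_comm (G.edgeFinset.card : ℝ)]
  rw [hsum, Finset.sum_eq_zero_iff_of_nonneg
    fun v _ => add_nonneg (hite v) (Finset.sum_nonneg (hnonneg v))]
  refine ⟨fun h v => ?_, fun h v _ => ?_⟩
  · have hv := h v (Finset.mem_univ v)
    rw [add_eq_zero_iff_of_nonneg (hite v) (Finset.sum_nonneg (hnonneg v)),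
      Finset.sum_eq_zero_iff_of_nonneg (hnonneg v)] at hv
    have hdeg : G.degree v ≠ 0 := fun h0 => by simp [h0] at hv
    obtain ⟨u, hu⟩ := (G.degree_pos_iff_exists_adj v).1 (Nat.pos_of_ne_zero hdeg)
    have hmax := (hSI.reciprocal_sum_sub_nonneg hk hu).2.1
      (hv.2 u ((G.mem_neighborFinset v u).2 hu))
    have := G.degree_le_maxDegree v
    rcases hSI.degree_eq_or hu with e | e <;> omega
  · have hv := h v
    rw [if_neg (by omega), zero_add]
    refine Finset.sum_eq_zero fun u hu => ?_
    have hadj := (G.mem_neighborFinset v u).1 hu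
    refine (hSI.reciprocal_sum_sub_nonneg hk hadj).2.2 ?_
    have hu := h u
    rcases hSI.degree_eq_or hadj with e | e <;> omega
end

section
/- Let k ≥ 1 be an integer and let G be a connected k-stepwise irregular graph on n vertices with radius at least 2, maximum degree Δ = Δ(G) and Wiener index W(G). Then W(G) ≥ n·( n − Δ(Δ − k)/(2Δ − k) − 1 ). -/
open SimpleGraph Finset

/-- Two positive reals at most `D` that differ by exactly `k` have reciprocal sum at least
`1 / D + 1 / (D - k)`. -/
lemma inv_add_inv_le_of_abs_sub_eq {a b D k : ℝ} (ha : 0 < a) (hb : 0 < b) (haD : a ≤ D)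
    (hbD : b ≤ D) (hab : |a - b| = k) : D⁻¹ + (D - k)⁻¹ ≤ a⁻¹ + b⁻¹ := by
  rcases abs_cases (a - b) with ⟨h, -⟩ | ⟨h, -⟩
  · have h₁ : D⁻¹ ≤ a⁻¹ := inv_anti₀ ha haD
    have h₂ : (D - k)⁻¹ ≤ b⁻¹ := inv_anti₀ hb (by linarith)
    linarith
  · have h₁ : D⁻¹ ≤ b⁻¹ := inv_anti₀ hb hbD
    have h₂ : (D - k)⁻¹ ≤ a⁻¹ := inv_anti₀ ha (by linarith)
    linarith

section

variable {V : Type*} [Fintype V] {G : SimpleGraph V} [DecidableRel G.Adj]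

/-- Weighting each edge by the reciprocal degree of its first endpoint counts the vertices. -/
lemma sum_sum_adj_inv_degree (hpos : ∀ v, 0 < G.degree v) :
    ∑ u : V, ∑ v : V, (if G.Adj u v then (G.degree u : ℝ)⁻¹ else 0) = Fintype.card V := by
  have h : ∀ u : V, ∑ v : V, (if G.Adj u v then (G.degree u : ℝ)⁻¹ else 0) = 1 := fun u ↦ by
    have hu : (G.degree u : ℝ) ≠ 0 := by exact_mod_cast (hpos u).ne'
    rw [← Finset.sum_filter, ← neighborFinset_eq_filter, Finset.sum_const,
      card_neighborFinset_eq_degree, nsmul_eq_mul, mul_inv_cancel₀ hu]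
  simp [h]

/-- A `k`-stepwise irregular graph without isolated vertices has few adjacent pairs. -/
lemma IsSI.sum_sum_adj_mul_le {k : ℕ} (hSI : IsSI G k) (hpos : ∀ v, 0 < G.degree v) :
    (∑ u : V, ∑ v : V, if G.Adj u v then (1 : ℝ) else 0) *
      ((G.maxDegree : ℝ)⁻¹ + ((G.maxDegree : ℝ) - k)⁻¹) ≤ 2 * Fintype.card V := by
  have hswap : ∑ u : V, ∑ v : V, (if G.Adj u v then (G.degree v : ℝ)⁻¹ else 0) =
      Fintype.card V := by
    rw [Finset.sum_comm, ← sum_sum_adj_inv_degree hpos]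
    simp only [G.adj_comm]
  rw [two_mul]
  nth_rewrite 1 [← sum_sum_adj_inv_degree hpos]
  rw [← hswap, ← Finset.sum_add_distrib, Finset.sum_mul]
  refine Finset.sum_le_sum fun u _ ↦ ?_
  rw [← Finset.sum_add_distrib, Finset.sum_mul]
  refine Finset.sum_le_sum fun v _ ↦ ?_
  split_ifs with huv
  · rw [one_mul]
    exact inv_add_inv_le_of_abs_sub_eq (by exact_mod_cast hpos u) (by exact_mod_cast hpos v)
      (by exact_mod_cast G.degree_le_maxDegree u) (by exact_mod_cast G.degree_le_maxDegree v)
      (by exact_mod_cast hSI huv)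
  · simp

/-- Without isolated vertices, the maximum degree of a stepwise irregular graph exceeds `k`. -/
lemma IsSI.lt_maxDegree [Nonempty V] {k : ℕ} (hSI : IsSI G k)
    (hpos : ∀ v, 0 < G.degree v) : k < G.maxDegree := by
  obtain ⟨u⟩ := ‹Nonempty V›
  obtain ⟨v, huv⟩ := (G.degree_pos_iff_exists_adj u).1 (hpos u)
  have h := hSI huv
  have hu := hpos u
  have hv := hpos v
  have hu' := G.degree_le_maxDegree u
  have hv' := G.degree_le_maxDegree v
  rcases abs_cases ((G.degree u : ℤ) - G.degree v) with h' | h' <;> omega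

/-- In a connected graph the distances are bounded below by counting every non-adjacent pair of
distinct vertices with distance two. -/
lemma SimpleGraph.Connected.le_sum_sum_dist (hconn : G.Connected) :
    2 * (Fintype.card V : ℝ) * (Fintype.card V - 1) -
      (∑ u : V, ∑ v : V, if G.Adj u v then (1 : ℝ) else 0) ≤
      ∑ u : V, ∑ v : V, (G.dist u v : ℝ) := by
  classical
  have h : ∀ u v : V, (2 : ℝ) - (if u = v then 2 else 0) - (if G.Adj u v then 1 else 0) ≤
      G.dist u v := fun u v ↦ by
    by_cases huv : u = v
    · simp [huv]
    by_cases hadj : G.Adj u v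
    · rw [dist_eq_one_iff_adj.2 hadj]
      norm_num [huv, hadj]
    · have h₀ := hconn.pos_dist_of_ne huv
      have h₁ : G.dist u v ≠ 1 := fun h ↦ hadj (dist_eq_one_iff_adj.1 h)
      have h₂ : 2 ≤ G.dist u v := by omega
      simpa [huv, hadj] using h₂
  refine le_trans (le_of_eq ?_) (Finset.sum_le_sum fun u _ ↦ Finset.sum_le_sum fun v _ ↦ h u v)
  simp only [Finset.sum_sub_distrib, Finset.sum_ite_eq, Finset.mem_univ, if_true,
    Finset.sum_const, Finset.card_univ, nsmul_eq_mul]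
  ring

end

/-- A connected `k`-stepwise irregular graph of radius at least `2` satisfies
`W(G) ≥ n(n − Δ(Δ − k)/(2Δ − k) − 1)`, where `W` is the Wiener index. -/
theorem ksi_wiener_lower_bound {V : Type*} [Fintype V] (G : SimpleGraph V)
    [DecidableRel G.Adj] (k : ℕ) (hk : 1 ≤ k) (hSI : IsSI G k) (hconn : G.Connected)
    (hrad : ∀ v : V, ∃ u : V, 2 ≤ G.dist v u) :
    (Fintype.card V : ℝ) *
        ((Fintype.card V : ℝ) -
          (G.maxDegree : ℝ) * ((G.maxDegree : ℝ) - k) / (2 * (G.maxDegree : ℝ) - k) - 1) ≤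
      (∑ u : V, ∑ v : V, (G.dist u v : ℝ)) / 2 := by
  have := hconn.nonempty
  have : Nontrivial V := by
    obtain ⟨v⟩ := hconn.nonempty
    obtain ⟨u, hu⟩ := hrad v
    refine ⟨v, u, ?_⟩
    rintro rfl
    simp at hu
  have hpos : ∀ v, 0 < G.degree v := fun v ↦ hconn.preconnected.degree_pos_of_nontrivial v
  have hkD : (k : ℝ) < G.maxDegree := by exact_mod_cast hSI.lt_maxDegree hpos
  have hS := hSI.sum_sum_adj_mul_le hpos
  have hW := hconn.le_sum_sum_dist
  set S := ∑ u : V, ∑ v : V, if G.Adj u v then (1 : ℝ) else 0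
  set D := (G.maxDegree : ℝ)
  have hk₀ : (0 : ℝ) ≤ k := k.cast_nonneg
  have hD : 0 < D := by linarith
  have hDk : 0 < D - k := by linarith
  have h2D : 0 < 2 * D - k := by linarith
  have hc : D⁻¹ + (D - k)⁻¹ = (D * (D - k) / (2 * D - k))⁻¹ := by
    field_simp
    ring
  rw [hc, ← div_eq_mul_inv, div_le_iff₀ (by positivity)] at hS
  linarith
end

section
/- Let k ≥ 1 be an integer and let G be a k-stepwise irregular graph on n vertices with at least one edge and maximum degree Δ = Δ(G). If G has exactly two distinct vertex degrees and gcd(Δ, k) = 1, then 2Δ − k divides n. -/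
open SimpleGraph Finset

/-- Double counting of the edges of a graph each of whose edges joins a vertex of degree `D`
to a vertex of degree `d`. -/
theorem card_filter_degree_mul_eq {V : Type*} [Fintype V] (G : SimpleGraph V)
    [DecidableRel G.Adj] {D d : ℕ}
    (hD : ∀ ⦃u v : V⦄, G.Adj u v → G.degree u = D → G.degree v = d)
    (hd : ∀ ⦃u v : V⦄, G.Adj u v → G.degree u = d → G.degree v = D) :
    #{v | G.degree v = D} * D = #{v | G.degree v = d} * d := by
  refine Finset.card_mul_eq_card_mul G.Adj (fun a ha => ?_) (fun b hb => ?_)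
  · have ha' : G.degree a = D := by simpa using ha
    rw [← ha', ← G.card_neighborFinset_eq_degree a]
    congr 1
    ext w
    simp only [Finset.mem_bipartiteAbove, Finset.mem_filter, Finset.mem_univ, true_and,
      mem_neighborFinset]
    exact ⟨fun h => h.2, fun h => ⟨hD h ha', h⟩⟩
  · have hb' : G.degree b = d := by simpa using hb
    rw [← hb', ← G.card_neighborFinset_eq_degree b]
    congr 1
    ext w
    simp only [Finset.mem_bipartiteBelow, Finset.mem_filter, Finset.mem_univ, true_and,
      mem_neighborFinset]
    exact ⟨fun h => h.2.symm, fun h => ⟨hd h hb', h.symm⟩⟩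

/-- If a `k`-stepwise irregular graph with an edge has exactly two distinct degrees
and `gcd(Δ, k) = 1`, then `2Δ − k` divides `n`. -/
theorem ksi_dvd_card {V : Type*} [Fintype V] (G : SimpleGraph V) [DecidableRel G.Adj]
    (k : ℕ) (hk : 1 ≤ k) (hSI : IsSI G k) (he : ∃ u v, G.Adj u v)
    (hdeg : (Finset.univ.image fun v => G.degree v).card = 2)
    (hgcd : Nat.gcd G.maxDegree k = 1) :
    (2 * (G.maxDegree : ℤ) - k) ∣ (Fintype.card V : ℤ) := by
  classical
  obtain ⟨u, v, huv, hlt⟩ : ∃ u v, G.Adj u v ∧ G.degree u = G.degree v + k := by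
    obtain ⟨u, v, huv⟩ := he
    rcases (abs_eq (by positivity)).1 (hSI huv) with h | h
    · exact ⟨u, v, huv, by omega⟩
    · exact ⟨v, u, huv.symm, by omega⟩
  have himage : ({G.degree u, G.degree v} : Finset ℕ) =
      Finset.univ.image fun w => G.degree w := by
    refine Finset.eq_of_subset_of_card_le ?_ ?_
    · intro x hx
      rcases Finset.mem_insert.1 hx with rfl | hx
      · exact Finset.mem_image_of_mem _ (Finset.mem_univ _)
      · rw [Finset.mem_singleton.1 hx]
        exact Finset.mem_image_of_mem _ (Finset.mem_univ _)
    · rw [hdeg, Finset.card_pair (by omega)]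
  have hcases (w : V) : G.degree w = G.degree u ∨ G.degree w = G.degree v := by
    have hw : G.degree w ∈ ({G.degree u, G.degree v} : Finset ℕ) :=
      himage ▸ Finset.mem_image_of_mem _ (Finset.mem_univ w)
    simpa using hw
  have hmax : G.maxDegree = G.degree u := by
    refine le_antisymm (G.maxDegree_le_of_forall_degree_le _ fun w => ?_)
      (G.degree_le_maxDegree u)
    rcases hcases w with h | h <;> omega
  have hne ⦃x y : V⦄ (hxy : G.Adj x y) : G.degree x ≠ G.degree y := by
    intro h
    have := hSI hxy
    rw [h, sub_self, abs_zero] at this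
    omega
  have hcount := card_filter_degree_mul_eq G (D := G.degree u) (d := G.degree v)
    (fun x y hxy hx => (hcases y).resolve_left fun h => hne hxy (hx.trans h.symm))
    (fun x y hxy hx => (hcases y).resolve_right fun h => hne hxy (hx.trans h.symm))
  have hcard : #{w | G.degree w = G.degree u} + #{w | G.degree w = G.degree v} =
      Fintype.card V := by
    rw [← Finset.card_univ,
      ← Finset.card_filter_add_card_filter_not (s := Finset.univ)
        (fun w => G.degree w = G.degree u)]
    congr 2
    ext w
    have := hcases w
    simp only [Finset.mem_filter, Finset.mem_univ, true_and]
    omega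
  have hcop : Nat.Coprime (G.degree u) (G.degree v) := by
    have h : Nat.Coprime (G.degree v + k) k := by rwa [← hlt, ← hmax]
    rw [hlt]
    simpa [Nat.coprime_comm] using h
  have hpos : 0 < G.degree u := by omega
  obtain ⟨t, ht⟩ : G.degree u ∣ #{w | G.degree w = G.degree v} :=
    hcop.dvd_of_dvd_mul_right ⟨_, by rw [← hcount, mul_comm]⟩
  have hA : #{w | G.degree w = G.degree u} = G.degree v * t := by
    rw [ht] at hcount
    refine Nat.eq_of_mul_eq_mul_right hpos (hcount.trans ?_)
    ring
  refine ⟨t, ?_⟩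
  rw [← hcard, hA, ht, hmax]
  push_cast [hlt]
  ring
end

section
/- Let k ≥ 1 be an integer and let G be a k-stepwise irregular graph with at least one edge and maximum degree Δ = Δ(G). Then the number of vertices of G of degree Δ − k is at least Δ. -/
open SimpleGraph Finset

/-- In a `k`-stepwise irregular graph with at least one edge, the number of vertices
of degree `Δ − k` is at least `Δ`. -/
theorem ksi_a1_ge_maxDegree {V : Type*} [Fintype V] (G : SimpleGraph V) [DecidableRel G.Adj]
    (k : ℕ) (hk : 1 ≤ k) (hSI : IsSI G k) (he : ∃ u v, G.Adj u v) :
    G.maxDegree ≤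
      (Finset.univ.filter fun v => (G.degree v : ℤ) = (G.maxDegree : ℤ) - k).card := by
  obtain ⟨u, -, -⟩ := he
  have : Nonempty V := ⟨u⟩
  obtain ⟨w, hw⟩ := G.exists_maximal_degree_vertex
  conv_lhs => rw [hw, ← G.card_neighborFinset_eq_degree]
  refine Finset.card_le_card fun v hv => ?_
  have hdiff := hSI ((G.mem_neighborFinset w v).1 hv)
  have hle : (G.degree v : ℤ) ≤ G.maxDegree := by exact_mod_cast G.degree_le_maxDegree v
  rw [← hw, abs_of_nonneg (sub_nonneg.2 hle)] at hdiff
  exact Finset.mem_filter.2 ⟨Finset.mem_univ v, by linarith⟩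
end

section
/- Let k ≥ 1 be an integer and let G be a k-stepwise irregular graph with at least one edge and maximum degree Δ = Δ(G). Let a_0 be the number of vertices of degree Δ and a_1 the number of vertices of degree Δ − k. Then a_0·Δ ≤ a_1·(Δ − k). -/
open SimpleGraph Finset

/-- In a `k`-stepwise irregular graph with at least one edge, with `a₀` the number of
vertices of degree `Δ` and `a₁` the number of vertices of degree `Δ − k`, we have
`a₀·Δ ≤ a₁·(Δ − k)`. -/
theorem ksi_a0_a1 {V : Type*} [Fintype V] (G : SimpleGraph V) [DecidableRel G.Adj]
    (k : ℕ) (hk : 1 ≤ k) (hSI : IsSI G k) (he : ∃ u v, G.Adj u v) :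
    ((Finset.univ.filter fun v => G.degree v = G.maxDegree).card : ℤ) * G.maxDegree ≤
      ((Finset.univ.filter fun v => (G.degree v : ℤ) = (G.maxDegree : ℤ) - k).card : ℤ) *
        ((G.maxDegree : ℤ) - k) := by
  rw [← nsmul_eq_mul, ← nsmul_eq_mul]
  refine Finset.card_nsmul_le_card_nsmul G.Adj (fun u hu => ?_) (fun v hv => ?_)
  · rw [Finset.mem_filter_univ] at hu
    have hcard : #(G.neighborFinset u) = G.maxDegree := by
      rw [G.card_neighborFinset_eq_degree, hu]
    refine (congrArg Nat.cast hcard).symm.trans_le <|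
      Nat.cast_le.mpr (Finset.card_le_card fun v hv => ?_)
    rw [G.mem_neighborFinset] at hv
    rw [Finset.mem_bipartiteAbove, Finset.mem_filter_univ]
    refine ⟨?_, hv⟩
    have hdeg := hSI hv
    have hle := G.degree_le_maxDegree v
    rw [abs_of_nonneg (by omega)] at hdeg
    omega
  · rw [Finset.mem_filter_univ] at hv
    rw [← hv, ← G.card_neighborFinset_eq_degree v, Nat.cast_le]
    refine Finset.card_le_card fun u hu => ?_
    rw [Finset.mem_bipartiteBelow] at hu
    exact (G.mem_neighborFinset v u).mpr hu.2.symm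
end

section
/- Let k ≥ 1 be an integer and let G be a k-stepwise irregular graph with maximum degree Δ = Δ(G). Let a_0 and a_2 be the numbers of vertices of G of degree Δ and of degree Δ − 2k, respectively. If a_2 > 0, then a_0 + a_2 ≥ Δ − k + 1. -/
open SimpleGraph Finset

/-- In a `k`-stepwise irregular graph, with `a₀` and `a₂` the numbers of vertices of
degree `Δ` and of degree `Δ − 2k`: if `a₂ > 0` then `a₀ + a₂ ≥ Δ − k + 1`. -/
theorem ksi_a0_a2 {V : Type*} [Fintype V] (G : SimpleGraph V) [DecidableRel G.Adj]
    (k : ℕ) (hk : 1 ≤ k) (hSI : IsSI G k)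
    (h2 : 0 < (Finset.univ.filter
      fun v => (G.degree v : ℤ) = (G.maxDegree : ℤ) - 2 * k).card) :
    (G.maxDegree : ℤ) - k + 1 ≤
      ((Finset.univ.filter fun v => G.degree v = G.maxDegree).card : ℤ) +
        ((Finset.univ.filter
          fun v => (G.degree v : ℤ) = (G.maxDegree : ℤ) - 2 * k).card : ℤ) := by
  classical
  set A := Finset.univ.filter fun v => G.degree v = G.maxDegree
  set C := Finset.univ.filter fun v => (G.degree v : ℤ) = (G.maxDegree : ℤ) - 2 * k
  obtain ⟨w, hwC⟩ := Finset.card_pos.mp h2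
  have hw : (G.degree w : ℤ) = (G.maxDegree : ℤ) - 2 * k := (Finset.mem_filter.mp hwC).2
  have : Nonempty V := ⟨w⟩
  obtain ⟨v, hv⟩ := G.exists_maximal_degree_vertex
  have degree_of_adj : ∀ u, G.Adj v u → (G.degree u : ℤ) = (G.maxDegree : ℤ) - k := by
    intro u hu
    have h := hSI hu
    have hle := G.degree_le_maxDegree u
    rcases abs_cases ((G.degree v : ℤ) - (G.degree u : ℤ)) with h' | h' <;> omega
  have neighbors_subset : ∀ u, G.Adj v u → G.neighborFinset u ⊆ A ∪ C := by
    intro u hu x hx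
    have h := hSI ((G.mem_neighborFinset u x).mp hx)
    have hd := degree_of_adj u hu
    simp only [A, C, Finset.mem_union, Finset.mem_filter, Finset.mem_univ, true_and]
    rcases abs_cases ((G.degree u : ℤ) - (G.degree x : ℤ)) with h' | h' <;> omega
  by_contra! hlt
  have hcard := Finset.card_union_le A C
  -- If the bound fails, every neighbor of `v` is adjacent to all of `A ∪ C`, hence to `w`.
  have hsub : G.neighborFinset v ⊆ G.neighborFinset w := by
    intro u hu
    rw [mem_neighborFinset] at hu ⊢
    have hd := degree_of_adj u hu
    have heq : G.neighborFinset u = A ∪ C :=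
      Finset.eq_of_subset_of_card_le (neighbors_subset u hu) (by
        rw [card_neighborFinset_eq_degree]
        omega)
    have hwu : w ∈ G.neighborFinset u := heq ▸ Finset.mem_union_right A hwC
    exact ((G.mem_neighborFinset u w).mp hwu).symm
  have hle := Finset.card_le_card hsub
  rw [card_neighborFinset_eq_degree, card_neighborFinset_eq_degree] at hle
  omega
end

section
/- Let k ≥ 1 be an integer and let G be a k-stepwise irregular graph with maximum degree Δ = Δ(G). Let i ≥ 1 and suppose G has a vertex of degree Δ − ik which has a neighbor. Then Δ − ik ≤ a_{i−1} + a_{i+1}, where a_j denotes the number of vertices of G of degree Δ − jk. -/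
open SimpleGraph Finset

/-- In a `k`-stepwise irregular graph, if `i ≥ 1` and some vertex of degree `Δ − ik`
has a neighbor, then `Δ − ik ≤ a_{i−1} + a_{i+1}`, where `a_j` counts the vertices of
degree `Δ − jk`. -/
theorem ksi_aj_bound {V : Type*} [Fintype V] (G : SimpleGraph V) [DecidableRel G.Adj]
    (k : ℕ) (hk : 1 ≤ k) (hSI : IsSI G k) (i : ℕ) (hi : 1 ≤ i)
    (hv : ∃ v : V, (G.degree v : ℤ) = (G.maxDegree : ℤ) - i * k ∧ ∃ u, G.Adj v u) :
    (G.maxDegree : ℤ) - i * k ≤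
      ((Finset.univ.filter
        fun v => (G.degree v : ℤ) = (G.maxDegree : ℤ) - (i - 1 : ℕ) * k).card : ℤ) +
      ((Finset.univ.filter
        fun v => (G.degree v : ℤ) = (G.maxDegree : ℤ) - (i + 1 : ℕ) * k).card : ℤ) := by
  classical
  obtain ⟨v, hdeg, -⟩ := hv
  rw [← hdeg, ← G.card_neighborFinset_eq_degree v]
  have hsub : G.neighborFinset v ⊆
      (Finset.univ.filter
        fun v => (G.degree v : ℤ) = (G.maxDegree : ℤ) - (i - 1 : ℕ) * k) ∪
      (Finset.univ.filter
        fun v => (G.degree v : ℤ) = (G.maxDegree : ℤ) - (i + 1 : ℕ) * k) := by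
    intro u hu
    have habs := hSI ((G.mem_neighborFinset v u).1 hu)
    simp only [Finset.mem_union, Finset.mem_filter, Finset.mem_univ, true_and]
    push_cast [Nat.cast_sub hi]
    rcases (abs_eq (Int.natCast_nonneg k)).1 habs with h | h
    · right; linarith
    · left; linarith
  exact_mod_cast (Finset.card_le_card hsub).trans (Finset.card_union_le _ _)
end

section
/- Let k ≥ 1 be an integer and let G be a k-stepwise irregular graph on n vertices with at least one edge and maximum degree Δ = Δ(G). Let a_1 be the number of vertices of G of degree Δ − k. Then a_1·(2Δ − k) ≤ n·Δ. -/
open SimpleGraph Finset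

/-- The degree sum of an independent set is at most the maximum degree times the size of
its complement. -/
theorem SimpleGraph.IsIndepSet.sum_degree_le {V : Type*} [Fintype V] [DecidableEq V]
    {G : SimpleGraph V} [DecidableRel G.Adj] {A : Finset V} (hA : G.IsIndepSet A) :
    ∑ v ∈ A, G.degree v ≤ #Aᶜ * G.maxDegree := by
  have hdeg : ∀ v ∈ A, G.degree v = #(Aᶜ.bipartiteAbove G.Adj v) := by
    intro v hv
    rw [← G.card_neighborFinset_eq_degree]
    congr 1
    ext w
    simp only [mem_neighborFinset, mem_bipartiteAbove, mem_compl]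
    exact ⟨fun h => ⟨fun hw => hA hv hw h.ne h, h⟩, fun h => h.2⟩
  rw [Finset.sum_congr rfl hdeg, sum_card_bipartiteAbove_eq_sum_card_bipartiteBelow,
    ← smul_eq_mul]
  refine Finset.sum_le_card_nsmul _ _ _ fun w _ => le_trans ?_ (G.degree_le_maxDegree w)
  rw [← G.card_neighborFinset_eq_degree]
  refine Finset.card_le_card fun v hv => ?_
  rw [mem_neighborFinset]
  exact ((mem_bipartiteBelow _).1 hv).2.symm

/-- In a `k`-stepwise irregular graph on `n` vertices with at least one edge, with
`a₁` the number of vertices of degree `Δ − k`, we have `a₁·(2Δ − k) ≤ n·Δ`. -/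
theorem ksi_a1_upper {V : Type*} [Fintype V] (G : SimpleGraph V) [DecidableRel G.Adj]
    (k : ℕ) (hk : 1 ≤ k) (hSI : IsSI G k) (he : ∃ u v, G.Adj u v) :
    ((Finset.univ.filter fun v => (G.degree v : ℤ) = (G.maxDegree : ℤ) - k).card : ℤ) *
        (2 * (G.maxDegree : ℤ) - k) ≤
      (Fintype.card V : ℤ) * G.maxDegree := by
  classical
  set A := Finset.univ.filter fun v => (G.degree v : ℤ) = (G.maxDegree : ℤ) - k with hAdef
  have hmem : ∀ v ∈ A, (G.degree v : ℤ) = (G.maxDegree : ℤ) - k := by simp [hAdef]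
  have hA : G.IsIndepSet A := by
    intro u hu v hv _ huv
    have h := hSI huv
    rw [hmem u hu, hmem v hv, sub_self, abs_zero] at h
    omega
  have hsum : ((∑ v ∈ A, G.degree v : ℕ) : ℤ) = #A * ((G.maxDegree : ℤ) - k) := by
    rw [Nat.cast_sum, Finset.sum_congr rfl hmem, Finset.sum_const, nsmul_eq_mul]
  have hle : ((∑ v ∈ A, G.degree v : ℕ) : ℤ) ≤ #Aᶜ * G.maxDegree := by
    exact_mod_cast hA.sum_degree_le
  have hcard : (#A : ℤ) + #Aᶜ = Fintype.card V := by
    exact_mod_cast A.card_add_card_compl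
  rw [hsum] at hle
  rw [← hcard]
  linarith
end
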